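/- Let n ≥ 2 and 1 ≤ r ≤ n-1, and let A ⊆ [n]^(r). Then the lower n-section of N(A) equals N(A₀) ∪ ∂⁺(A₁) and the upper n-section of N(A) equals N(A₁) ∪ ∂⁻(A₀), where on the right-hand sides N, ∂⁻, ∂⁺ are taken with respect to the ground set [n-1]. Consequently |N(A)| = |N(A₀) ∪ ∂⁺(A₁)| + |N(A₁) ∪ ∂⁻(A₀)|. -/

import Mathlib

/-- `[m]^(k)`: the `k`-element subsets of `{1,…,m}`. -/
def rSets (m k : ℕ) : Finset (Finset ℕ) := (Finset.Icc 1 m).powersetCard k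

/-- The neighbourhood `N(A) = A ∪ b(A)` of `A ⊆ [m]^(k)` in the graph `Γ_m^(k)`
where `x ~ y` iff `|x Δ y| = 2`. -/
def nbhd (m k : ℕ) (A : Finset (Finset ℕ)) : Finset (Finset ℕ) :=
  A ∪ (rSets m k).filter (fun x => x ∉ A ∧ ∃ y ∈ A, (symmDiff x y).card = 2)

/-- The lower `n`-section `B₀ = {x ∈ B : n ∉ x}` of a family `B`. -/
def lowerSection (n : ℕ) (B : Finset (Finset ℕ)) : Finset (Finset ℕ) :=
  B.filter (fun x => n ∉ x)

/-- The upper `n`-section `B₁ = {x ∈ [n-1]^(r-1) : x ∪ {n} ∈ B}` of a family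
`B ⊆ [n]^(r)`. -/
def upperSection (n r : ℕ) (B : Finset (Finset ℕ)) : Finset (Finset ℕ) :=
  (rSets (n - 1) (r - 1)).filter (fun x => insert n x ∈ B)

/-- The lower shadow `∂⁻B = {x ∈ [m]^(k-1) : x ⊂ y for some y ∈ B}` of `B ⊆ [m]^(k)`. -/
def lowerShadow (m k : ℕ) (B : Finset (Finset ℕ)) : Finset (Finset ℕ) :=
  (rSets m (k - 1)).filter (fun x => ∃ y ∈ B, x ⊂ y)

/-- The upper shadow `∂⁺B = {x ∈ [m]^(k+1) : y ⊂ x for some y ∈ B}` of `B ⊆ [m]^(k)`. -/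
def upperShadow (m k : ℕ) (B : Finset (Finset ℕ)) : Finset (Finset ℕ) :=
  (rSets m (k + 1)).filter (fun x => ∃ y ∈ B, y ⊂ x)

/-!
Two `r`-sets `x`, `y` are adjacent when `y` arises from `x` by exchanging one element for another.
If both contain `n`, or neither does, then the exchange takes place inside `[n-1]`, so it is
adjacency there. If only `x` contains `n`, then `n` itself is exchanged, so adjacency says precisely
that `x \ {n} ⊂ y`. Splitting both `N(A)` and `A` by membership of `n` gives the four terms.
-/

section

open Finset
open scoped symmDiff

section SymmDiff

variable {α : Type*} [DecidableEq α] {a : α} {s t : Finset α}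

lemma insert_symmDiff_insert_of_notMem (hs : a ∉ s) (ht : a ∉ t) :
    insert a s ∆ insert a t = s ∆ t := by
  grind [mem_symmDiff]

lemma insert_symmDiff_of_notMem_right (ht : a ∉ t) : insert a s ∆ t = insert a (s ∆ t) := by
  grind [mem_symmDiff]

lemma card_symmDiff_eq_card_sdiff_add_card_sdiff (s t : Finset α) :
    #(s ∆ t) = #(s \ t) + #(t \ s) :=
  card_union_of_disjoint disjoint_sdiff_sdiff

lemma card_symmDiff_eq_one_iff_ssubset (hst : #t = #s + 1) : #(s ∆ t) = 1 ↔ s ⊂ t := by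
  have hs : #(s \ t) + #(s ∩ t) = #s := card_sdiff_add_card_inter s t
  have ht : #(t \ s) + #(s ∩ t) = #t := inter_comm t s ▸ card_sdiff_add_card_inter t s
  have hsub : #(s \ t) = 0 ↔ s ⊆ t := by rw [card_eq_zero, sdiff_eq_empty_iff_subset]
  have hne : s ≠ t := by rintro rfl; omega
  rw [card_symmDiff_eq_card_sdiff_add_card_sdiff, ssubset_iff_subset_ne, and_iff_left hne, ← hsub]
  omega

lemma card_insert_symmDiff_eq_two_iff_ssubset (hs : a ∉ s) (ht : a ∉ t) (hst : #t = #s + 1) :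
    #(insert a s ∆ t) = 2 ↔ s ⊂ t := by
  have ha : a ∉ s ∆ t := by simp [mem_symmDiff, hs, ht]
  rw [insert_symmDiff_of_notMem_right ht, card_insert_of_notMem ha, ← one_add_one_eq_two,
    add_left_inj, card_symmDiff_eq_one_iff_ssubset hst]

end SymmDiff

lemma exists_mem_iff_nonMemberSubfamily_or_memberSubfamily {α : Type*} [DecidableEq α] (a : α)
    {𝒜 : Finset (Finset α)} {p : Finset α → Prop} :
    (∃ s ∈ 𝒜, p s) ↔
      (∃ s ∈ 𝒜.nonMemberSubfamily a, p s) ∨ ∃ s ∈ 𝒜.memberSubfamily a, p (insert a s) := by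
  simp only [mem_nonMemberSubfamily, mem_memberSubfamily]
  constructor
  · rintro ⟨s, hs, hp⟩
    by_cases ha : a ∈ s
    · exact .inr ⟨s.erase a, by simpa [insert_erase ha] using hs, by rwa [insert_erase ha]⟩
    · exact .inl ⟨s, ⟨hs, ha⟩, hp⟩
  · rintro (⟨s, ⟨hs, -⟩, hp⟩ | ⟨s, ⟨hs, -⟩, hp⟩)
    exacts [⟨s, hs, hp⟩, ⟨insert a s, hs, hp⟩]

variable {m k : ℕ} {A : Finset (Finset ℕ)} {x : Finset ℕ}

lemma card_of_mem_rSets (hx : x ∈ rSets m k) : #x = k :=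
  (mem_powersetCard.mp hx).2

lemma mem_rSets_iff_mem_rSets_succ_and_notMem :
    x ∈ rSets m k ↔ x ∈ rSets (m + 1) k ∧ m + 1 ∉ x := by
  have hIcc : Icc 1 m = (Icc 1 (m + 1)).erase (m + 1) := by grind
  simp only [rSets, mem_powersetCard, hIcc, subset_erase]
  tauto

lemma notMem_of_mem_rSets (hx : x ∈ rSets m k) : m + 1 ∉ x :=
  (mem_rSets_iff_mem_rSets_succ_and_notMem.mp hx).2

lemma insert_mem_rSets_iff (hx : m + 1 ∉ x) :
    insert (m + 1) x ∈ rSets (m + 1) (k + 1) ↔ x ∈ rSets m k := by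
  rw [mem_rSets_iff_mem_rSets_succ_and_notMem (x := x), and_iff_left hx]
  simp [rSets, mem_powersetCard, insert_subset_iff, card_insert_of_notMem hx]

lemma mem_nbhd : x ∈ nbhd m k A ↔ x ∈ A ∨ x ∈ rSets m k ∧ ∃ y ∈ A, #(x ∆ y) = 2 := by
  simp only [nbhd, mem_union, mem_filter]
  tauto

lemma nbhd_subset_rSets (hA : A ⊆ rSets m k) : nbhd m k A ⊆ rSets m k :=
  union_subset hA (filter_subset _ _)

lemma lowerSection_eq_nonMemberSubfamily : lowerSection m A = A.nonMemberSubfamily m := rfl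

lemma upperSection_eq_memberSubfamily (hA : A ⊆ rSets (m + 1) (k + 1)) :
    upperSection (m + 1) (k + 1) A = A.memberSubfamily (m + 1) := by
  ext x
  simp only [upperSection, Nat.add_sub_cancel, mem_filter, mem_memberSubfamily]
  constructor
  · exact fun ⟨hx, hxA⟩ ↦ ⟨hxA, notMem_of_mem_rSets hx⟩
  · exact fun ⟨hxA, hx⟩ ↦ ⟨(insert_mem_rSets_iff hx).mp (hA hxA), hxA⟩

lemma card_lowerSection_add_card_upperSection (hA : A ⊆ rSets (m + 1) (k + 1)) :
    #(lowerSection (m + 1) A) + #(upperSection (m + 1) (k + 1) A) = #A := by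
  rw [lowerSection_eq_nonMemberSubfamily, upperSection_eq_memberSubfamily hA, add_comm,
    card_memberSubfamily_add_card_nonMemberSubfamily]

lemma exists_mem_iff_lowerSection_or_upperSection (hA : A ⊆ rSets (m + 1) (k + 1))
    {p : Finset ℕ → Prop} :
    (∃ y ∈ A, p y) ↔ (∃ y ∈ lowerSection (m + 1) A, p y) ∨
      ∃ z ∈ upperSection (m + 1) (k + 1) A, p (insert (m + 1) z) := by
  rw [upperSection_eq_memberSubfamily hA]
  exact exists_mem_iff_nonMemberSubfamily_or_memberSubfamily (m + 1)

lemma lowerSection_subset_rSets (hA : A ⊆ rSets (m + 1) k) :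
    lowerSection (m + 1) A ⊆ rSets m k := fun _ hx ↦
  have ⟨hxA, hmx⟩ := mem_filter.mp hx
  mem_rSets_iff_mem_rSets_succ_and_notMem.mpr ⟨hA hxA, hmx⟩

lemma upperSection_subset_rSets : upperSection (m + 1) (k + 1) A ⊆ rSets m k :=
  filter_subset _ _

lemma card_insert_symmDiff_eq_two_iff_of_mem_rSets {y z : Finset ℕ}
    (hy : y ∈ rSets m (k + 1)) (hz : z ∈ rSets m k) :
    #(insert (m + 1) z ∆ y) = 2 ↔ z ⊂ y :=
  card_insert_symmDiff_eq_two_iff_ssubset (notMem_of_mem_rSets hz) (notMem_of_mem_rSets hy)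
    (by rw [card_of_mem_rSets hy, card_of_mem_rSets hz])

theorem lowerSection_nbhd (hA : A ⊆ rSets (m + 1) (k + 1)) :
    lowerSection (m + 1) (nbhd (m + 1) (k + 1) A) =
      nbhd m (k + 1) (lowerSection (m + 1) A) ∪
        upperShadow m k (upperSection (m + 1) (k + 1) A) := by
  ext x
  have hshadow (hx : x ∈ rSets m (k + 1)) :
      (∃ z ∈ upperSection (m + 1) (k + 1) A, #(x ∆ insert (m + 1) z) = 2) ↔
        ∃ z ∈ upperSection (m + 1) (k + 1) A, z ⊂ x :=
    exists_congr fun z ↦ and_congr_right fun hz ↦ by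
      rw [symmDiff_comm,
        card_insert_symmDiff_eq_two_iff_of_mem_rSets hx (upperSection_subset_rSets hz)]
  calc x ∈ lowerSection (m + 1) (nbhd (m + 1) (k + 1) A)
      ↔ x ∈ lowerSection (m + 1) A ∨ x ∈ rSets m (k + 1) ∧ ∃ y ∈ A, #(x ∆ y) = 2 := by
        rw [mem_rSets_iff_mem_rSets_succ_and_notMem]
        simp only [lowerSection, mem_filter, mem_nbhd]
        tauto
    _ ↔ x ∈ lowerSection (m + 1) A ∨ x ∈ rSets m (k + 1) ∧
          ((∃ y ∈ lowerSection (m + 1) A, #(x ∆ y) = 2) ∨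
            ∃ z ∈ upperSection (m + 1) (k + 1) A, z ⊂ x) := by
        rw [exists_mem_iff_lowerSection_or_upperSection hA]
        exact or_congr_right (and_congr_right fun hx ↦ or_congr_right (hshadow hx))
    _ ↔ _ := by
        rw [mem_union, mem_nbhd, upperShadow, mem_filter, and_or_left, or_assoc]

theorem upperSection_nbhd (hA : A ⊆ rSets (m + 1) (k + 1)) :
    upperSection (m + 1) (k + 1) (nbhd (m + 1) (k + 1) A) =
      nbhd m k (upperSection (m + 1) (k + 1) A) ∪
        lowerShadow m (k + 1) (lowerSection (m + 1) A) := by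
  ext x
  have hnbhd (hx : x ∈ rSets m k) :
      (∃ z ∈ upperSection (m + 1) (k + 1) A, #(insert (m + 1) x ∆ insert (m + 1) z) = 2) ↔
        ∃ z ∈ upperSection (m + 1) (k + 1) A, #(x ∆ z) = 2 :=
    exists_congr fun z ↦ and_congr_right fun hz ↦ by
      rw [insert_symmDiff_insert_of_notMem (notMem_of_mem_rSets hx)
        (notMem_of_mem_rSets (upperSection_subset_rSets hz))]
  have hshadow (hx : x ∈ rSets m k) :
      (∃ y ∈ lowerSection (m + 1) A, #(insert (m + 1) x ∆ y) = 2) ↔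
        ∃ y ∈ lowerSection (m + 1) A, x ⊂ y :=
    exists_congr fun y ↦ and_congr_right fun hy ↦
      card_insert_symmDiff_eq_two_iff_of_mem_rSets (lowerSection_subset_rSets hA hy) hx
  calc x ∈ upperSection (m + 1) (k + 1) (nbhd (m + 1) (k + 1) A)
      ↔ x ∈ upperSection (m + 1) (k + 1) A ∨
          x ∈ rSets m k ∧ ∃ y ∈ A, #(insert (m + 1) x ∆ y) = 2 := by
        simp only [upperSection, Nat.add_sub_cancel, mem_filter, mem_nbhd, ← and_or_left]
        refine and_congr_right fun hx ↦ or_congr_right (and_iff_right ?_)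
        exact (insert_mem_rSets_iff (notMem_of_mem_rSets hx)).mpr hx
    _ ↔ x ∈ upperSection (m + 1) (k + 1) A ∨ x ∈ rSets m k ∧
          ((∃ y ∈ lowerSection (m + 1) A, x ⊂ y) ∨
            ∃ z ∈ upperSection (m + 1) (k + 1) A, #(x ∆ z) = 2) := by
        rw [exists_mem_iff_lowerSection_or_upperSection hA]
        exact or_congr_right (and_congr_right fun hx ↦ or_congr (hshadow hx) (hnbhd hx))
    _ ↔ _ := by
        rw [mem_union, mem_nbhd, lowerShadow, mem_filter, Nat.add_sub_cancel,
          or_comm (a := ∃ y ∈ _, _), and_or_left, or_assoc]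

end

/-- The `n`-sections of `N(A)` for `A ⊆ [n]^(r)`:
`(N(A))₀ = N(A₀) ∪ ∂⁺(A₁)` and `(N(A))₁ = N(A₁) ∪ ∂⁻(A₀)`, where on the right-hand sides
`N`, `∂⁻`, `∂⁺` are taken with respect to the ground set `[n-1]`; consequently
`|N(A)| = |N(A₀) ∪ ∂⁺(A₁)| + |N(A₁) ∪ ∂⁻(A₀)|`. -/
theorem stmt_7 (n r : ℕ) (hn : 2 ≤ n) (hr1 : 1 ≤ r) (hrn : r ≤ n - 1)
    (A : Finset (Finset ℕ)) (hA : A ⊆ rSets n r) :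
    lowerSection n (nbhd n r A)
        = nbhd (n - 1) r (lowerSection n A)
            ∪ upperShadow (n - 1) (r - 1) (upperSection n r A)
      ∧ upperSection n r (nbhd n r A)
        = nbhd (n - 1) (r - 1) (upperSection n r A)
            ∪ lowerShadow (n - 1) r (lowerSection n A)
      ∧ (nbhd n r A).card
        = (nbhd (n - 1) r (lowerSection n A)
            ∪ upperShadow (n - 1) (r - 1) (upperSection n r A)).card
          + (nbhd (n - 1) (r - 1) (upperSection n r A)
            ∪ lowerShadow (n - 1) r (lowerSection n A)).card := by
  obtain ⟨m, rfl⟩ : ∃ m, n = m + 1 := ⟨n - 1, by omega⟩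
  obtain ⟨k, rfl⟩ : ∃ k, r = k + 1 := ⟨r - 1, by omega⟩
  simp only [Nat.add_sub_cancel]
  have hlower := lowerSection_nbhd hA
  have hupper := upperSection_nbhd hA
  refine ⟨hlower, hupper, ?_⟩
  rw [← hlower, ← hupper, card_lowerSection_add_card_upperSection (nbhd_subset_rSets hA)]
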